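/- (Convergence of the marginals of admissible initial data in the Boltzmann–Grad scaling.) Let β₀ > 0, μ₀ ∈ ℝ, γ > 0 and let f^in : ℝ³ × ℝ³ → ℝ be continuous with 0 ≤ f^in(x,v) ≤ e^{−μ₀ − β₀|v|²/2} and ∬_{ℝ³×ℝ³} f^in(x,v) dx dv = 1. For N ≥ 1 set r := (1/2)√(γ/N), Z_N := ∫_{Γ^r_N} ∏_{i=1}^N f^in(x_i,v_i) dX_N dV_N, and (when Z_N > 0) F^in_N := Z_N^{-1} 1_{Ω^r_N}(X_N) ∏_{i=1}^N f^in(x_i,v_i), with marginals F^in_{N:k}(X_k,V_k) := ∫_{(ℝ³)^{N−k}×(ℝ³)^{N−k}} F^in_N(X_N,V_N) dx_{k+1}…dx_N dv_{k+1}…dv_N. Then for every fixed k ≥ 1, F^in_{N:k} converges to (X_k,V_k) ↦ ∏_{i=1}^k f^in(x_i,v_i) as N → ∞, uniformly on every compact subset of Ω^0_k × (ℝ³)^k, where Ω^0_k := {(x_1,…,x_k) ∈ (ℝ³)^k : x_i ≠ x_j for all i ≠ j}. -/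

import Mathlib

open MeasureTheory Real
open scoped ENNReal

noncomputable section

abbrev R3 : Type := EuclideanSpace ℝ (Fin 3)

/-- The weighted norm `|g|_{k,β} := ess sup |g(X_k,V_k)| exp(β|V_k|²/2)`, valued in `ℝ≥0∞`. -/
noncomputable def wnorm (k : ℕ) (β : ℝ) (g : (Fin k → R3) → (Fin k → R3) → ℝ) : ℝ≥0∞ :=
  essSup (fun Z : (Fin k → R3) × (Fin k → R3) =>
    ENNReal.ofReal (|g Z.1 Z.2| * exp (β * (∑ j, ‖Z.2 j‖ ^ 2) / 2))) volume

/-- The norm `‖(g_n)_{n≥1}‖_{μ,β} := sup_{n ≥ 1} |g_n|_{n,β} e^{μn}`, valued in `ℝ≥0∞`. -/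
noncomputable def seqnorm (μ β : ℝ)
    (g : (n : ℕ) → (Fin n → R3) → (Fin n → R3) → ℝ) : ℝ≥0∞ :=
  ⨆ n : ℕ, wnorm (n + 1) β (g (n + 1)) * ENNReal.ofReal (exp (μ * (n + 1)))

/-- The set `Ω^r_m` of admissible positions of `m` hard spheres of radius `r`. -/
def OmegaSet (m : ℕ) (r : ℝ) : Set (Fin m → R3) :=
  {X | ∀ i j : Fin m, i ≠ j → 2 * r < dist (X i) (X j)}

/-- The Boltzmann–Grad radius `r = (1/2)√(γ/N)`. -/
noncomputable def rBG (γ : ℝ) (N : ℕ) : ℝ := (1 / 2) * Real.sqrt (γ / N)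

/-- The normalization constant `Z_N = ∫_{Γ^r_N} ∏ f^in(x_i,v_i) dX_N dV_N`. -/
noncomputable def ZN (f : R3 → R3 → ℝ) (N : ℕ) (r : ℝ) : ℝ :=
  ∫ Z : (Fin N → R3) × (Fin N → R3),
    (OmegaSet N r).indicator (fun _ => (1 : ℝ)) Z.1 * ∏ i, f (Z.1 i) (Z.2 i)

/-- The admissible `N`-particle initial distribution
`F^in_N = Z_N⁻¹ 1_{Ω^r_N} ∏ f^in(x_i,v_i)`. -/
noncomputable def FinitN (f : R3 → R3 → ℝ) (N : ℕ) (r : ℝ) (X V : Fin N → R3) : ℝ :=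
  (ZN f N r)⁻¹ * (OmegaSet N r).indicator (fun _ => (1 : ℝ)) X * ∏ i, f (X i) (V i)

/-- Completion of a `k`-tuple by an `(N-k)`-tuple into an `N`-tuple. -/
def combine {N k : ℕ} (hk : k ≤ N) (X : Fin k → R3) (W : Fin (N - k) → R3) : Fin N → R3 :=
  fun i => if h : (i : ℕ) < k then X ⟨i, h⟩ else W ⟨(i : ℕ) - k, by have := i.isLt; omega⟩

/-- The `k`-th marginal of an `N`-particle distribution. -/
noncomputable def marginal (N k : ℕ) (hk : k ≤ N) (F : (Fin N → R3) → (Fin N → R3) → ℝ)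
    (X V : Fin k → R3) : ℝ :=
  ∫ W : (Fin (N - k) → R3) × (Fin (N - k) → R3), F (combine hk X W.1) (combine hk V W.2)

/-- The family of all marginals of an `N`-particle distribution (`0` for `k > N`). -/
noncomputable def margFam (N : ℕ) (F : (Fin N → R3) → (Fin N → R3) → ℝ) :
    (k : ℕ) → (Fin k → R3) → (Fin k → R3) → ℝ :=
  fun k => if hk : k ≤ N then marginal N k hk F else fun _ _ => 0

open Set Filter Topology

/-- Tonelli's theorem for a product of functions of separate coordinates. -/
theorem lintegral_fin_prod_eq_prod {E : Type*} [MeasurableSpace E] (μ : Measure E) [SigmaFinite μ]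
    (n : ℕ) (g : Fin n → E → ℝ≥0∞) (hg : ∀ i, Measurable (g i)) :
    ∫⁻ x : Fin n → E, ∏ i, g i (x i) ∂(Measure.pi fun _ => μ) = ∏ i, ∫⁻ y, g i y ∂μ := by
  induction n with
  | zero => simp
  | succ n ih =>
    rw [← (measurePreserving_piFinSuccAbove (fun _ => μ) 0).symm.lintegral_comp_emb
      (MeasurableEquiv.measurableEmbedding _)]
    simp_rw [MeasurableEquiv.piFinSuccAbove_symm_apply, Fin.insertNthEquiv,
      Fin.prod_univ_succ]
    simp only [Equiv.coe_fn_mk, Fin.insertNth_zero, Fin.cons_zero, Fin.cons_succ, cast_eq]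
    rw [lintegral_prod_mul (f := g 0) (g := fun y : Fin n → E => ∏ i, g i.succ (y i))
      (hg 0).aemeasurable
      (Finset.measurable_prod _ fun i _ => (hg _).comp (measurable_pi_apply i)).aemeasurable,
      ih _ fun i => hg _]

/-- A product of measures with density has the product of the densities as its density. -/
theorem pi_withDensity_eq {E : Type*} [MeasurableSpace E] (μ : Measure E) [SigmaFinite μ]
    (n : ℕ) (ρ : E → ℝ≥0∞) (hρ : Measurable ρ) [SigmaFinite (μ.withDensity ρ)] :
    Measure.pi (fun _ : Fin n => μ.withDensity ρ) =
      (Measure.pi fun _ : Fin n => μ).withDensity fun x => ∏ i, ρ (x i) := by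
  refine Measure.pi_eq fun s hs => ?_
  rw [withDensity_apply _ (MeasurableSet.univ_pi hs), ← lintegral_indicator (.univ_pi hs)]
  have h : (Set.univ.pi s).indicator (fun x : Fin n → E => ∏ i, ρ (x i)) =
      fun x => ∏ i, (s i).indicator ρ (x i) := by
    ext x
    by_cases hx : x ∈ Set.univ.pi s
    · rw [indicator_of_mem hx]
      exact Finset.prod_congr rfl fun i _ => (indicator_of_mem (hx i trivial) _).symm
    · rw [indicator_of_notMem hx]
      simp only [Set.mem_pi, Set.mem_univ, true_imp_iff, not_forall] at hx
      obtain ⟨i, hi⟩ := hx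
      exact (Finset.prod_eq_zero (Finset.mem_univ i) (indicator_of_notMem hi _)).symm
  rw [h, lintegral_fin_prod_eq_prod μ n (fun i => (s i).indicator ρ)
    fun i => hρ.indicator (hs i)]
  refine Finset.prod_congr rfl fun i _ => ?_
  rw [withDensity_apply _ (hs i), lintegral_indicator (hs i)]

theorem measurableSet_OmegaSet (m : ℕ) (r : ℝ) : MeasurableSet (OmegaSet m r) := by
  have : OmegaSet m r = ⋂ i, ⋂ j, ⋂ (_ : i ≠ j), {X | 2 * r < dist (X i) (X j)} := by
    ext X; simp [OmegaSet]
  rw [this]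
  exact .iInter fun i => .iInter fun j => .iInter fun _ =>
    measurableSet_lt measurable_const (by fun_prop)

/-- Integrating the coordinate `j` over a ball centered at a point that depends only on the other
coordinates costs at most the largest mass `δ` of a ball. -/
theorem measure_dist_le_mul (ν : Measure R3) [IsProbabilityMeasure ν] {s : ℝ} {δ : ℝ≥0∞}
    (hδ : ∀ x, ν (Metric.closedBall x s) ≤ δ) {n : ℕ} (j : Fin (n + 1))
    {B : Set (Fin n → R3)} (hB : MeasurableSet B) {g : (Fin n → R3) → R3} (hg : Measurable g) :
    Measure.pi (fun _ : Fin (n + 1) => ν)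
      {W | j.removeNth W ∈ B ∧ dist (W j) (g (j.removeNth W)) ≤ s} ≤
      δ * Measure.pi (fun _ : Fin n => ν) B := by
  have hmp := measurePreserving_piFinSuccAbove (fun _ : Fin (n + 1) => ν) j
  have hS : MeasurableSet {p : R3 × (Fin n → R3) | p.2 ∈ B ∧ dist p.1 (g p.2) ≤ s} :=
    (measurable_snd hB).inter <|
      measurableSet_le (measurable_fst.dist (hg.comp measurable_snd)) measurable_const
  have := hmp.measure_preimage hS.nullMeasurableSet
  calc _ = _ := this
    _ ≤ _ := by
      rw [Measure.prod_apply_symm hS]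
      calc _ ≤ ∫⁻ y, B.indicator (fun _ => δ) y ∂(Measure.pi fun _ : Fin n => ν) := by
            refine lintegral_mono fun y => ?_
            by_cases hy : y ∈ B
            · rw [indicator_of_mem hy]
              refine (measure_mono ?_).trans (hδ (g y))
              intro x hx
              exact hx.2
            · simp [hy]
        _ = _ := by rw [lintegral_indicator_const hB]

/-- The probability that `n` independent particles of law `ν` do not overlap. -/
def nonoverlapProb (ν : Measure R3) (n : ℕ) (r : ℝ) : ℝ :=
  (Measure.pi fun _ : Fin n => ν).real (OmegaSet n r)

theorem measurePreserving_removeNth (ν : Measure R3) [IsProbabilityMeasure ν] {n : ℕ}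
    (j : Fin (n + 1)) :
    MeasurePreserving (fun W : Fin (n + 1) → R3 => j.removeNth W)
      (Measure.pi fun _ => ν) (Measure.pi fun _ => ν) :=
  measurePreserving_snd.comp (measurePreserving_piFinSuccAbove (fun _ : Fin (n + 1) => ν) j)

theorem removeNth_mem_OmegaSet {n : ℕ} {r : ℝ} {W : Fin (n + 1) → R3}
    (hW : W ∈ OmegaSet (n + 1) r) (j : Fin (n + 1)) : j.removeNth W ∈ OmegaSet n r :=
  fun a b hab => hW _ _ (by simpa using hab)

theorem nonoverlapProb_zero (ν : Measure R3) [IsProbabilityMeasure ν] (r : ℝ) :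
    nonoverlapProb ν 0 r = 1 := by
  have : OmegaSet 0 r = Set.univ := by ext X; simp [OmegaSet]
  simp [nonoverlapProb, this]

theorem nonoverlapProb_nonneg (ν : Measure R3) (n : ℕ) (r : ℝ) : 0 ≤ nonoverlapProb ν n r :=
  measureReal_nonneg

theorem nonoverlapProb_succ_le (ν : Measure R3) [IsProbabilityMeasure ν] (n : ℕ) (r : ℝ) :
    nonoverlapProb ν (n + 1) r ≤ nonoverlapProb ν n r := by
  rw [nonoverlapProb, nonoverlapProb, ← (measurePreserving_removeNth ν (0 : Fin (n + 1))
    ).measureReal_preimage (measurableSet_OmegaSet n r).nullMeasurableSet]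
  exact measureReal_mono fun W hW => removeNth_mem_OmegaSet hW 0

theorem nonoverlapProb_antitone (ν : Measure R3) [IsProbabilityMeasure ν] (r : ℝ) :
    Antitone fun n => nonoverlapProb ν n r :=
  antitone_nat_of_succ_le fun n => nonoverlapProb_succ_le ν n r

theorem measureReal_dist_le_mul (ν : Measure R3) [IsProbabilityMeasure ν] {s δ : ℝ}
    (hδ : ∀ x, ν.real (Metric.closedBall x s) ≤ δ) {n : ℕ} (j : Fin (n + 1))
    {B : Set (Fin n → R3)} (hB : MeasurableSet B) {g : (Fin n → R3) → R3} (hg : Measurable g) :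
    (Measure.pi (fun _ : Fin (n + 1) => ν)).real
      {W | j.removeNth W ∈ B ∧ dist (W j) (g (j.removeNth W)) ≤ s} ≤
      δ * (Measure.pi (fun _ : Fin n => ν)).real B := by
  have h0 : 0 ≤ δ := measureReal_nonneg.trans (hδ 0)
  have := measure_dist_le_mul ν (δ := ENNReal.ofReal δ)
    (fun x => (ENNReal.le_ofReal_iff_toReal_le (measure_ne_top _ _) h0).2 (hδ x)) j hB hg
  rw [measureReal_def, measureReal_def]
  calc _ ≤ _ := ENNReal.toReal_mono (by finiteness) this
    _ = _ := by rw [ENNReal.toReal_mul, ENNReal.toReal_ofReal h0]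

theorem nonoverlapProb_succ_ge (ν : Measure R3) [IsProbabilityMeasure ν] {r δ : ℝ}
    (hδ : ∀ x, ν.real (Metric.closedBall x (2 * r)) ≤ δ) (n : ℕ) :
    (1 - n * δ) * nonoverlapProb ν n r ≤ nonoverlapProb ν (n + 1) r := by
  have hΩ := measurableSet_OmegaSet n r
  have hsub : (fun W : Fin (n + 1) → R3 => (0 : Fin (n + 1)).removeNth W) ⁻¹' OmegaSet n r ⊆
      OmegaSet (n + 1) r ∪ ⋃ i : Fin n, {W | (0 : Fin (n + 1)).removeNth W ∈ OmegaSet n r ∧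
        dist (W 0) ((0 : Fin (n + 1)).removeNth W i) ≤ 2 * r} := by
    intro W hW
    by_cases h : ∀ i : Fin n, 2 * r < dist (W 0) (W i.succ)
    · refine Or.inl fun a b hab => ?_
      cases a using Fin.cases with
      | zero =>
        cases b using Fin.cases with
        | zero => exact absurd rfl hab
        | succ b => exact h b
      | succ a =>
        cases b using Fin.cases with
        | zero => rw [dist_comm]; exact h a
        | succ b => exact hW a b (by simpa using hab)
    · push Not at h
      obtain ⟨i, hi⟩ := h
      exact Or.inr (mem_iUnion.2 ⟨i, hW, hi⟩)
  have h1 := measureReal_mono (μ := Measure.pi fun _ : Fin (n + 1) => ν) hsub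
  rw [(measurePreserving_removeNth ν (0 : Fin (n + 1))).measureReal_preimage
    hΩ.nullMeasurableSet] at h1
  have h2 := (h1.trans (measureReal_union_le _ _)).trans
    (add_le_add_right (measureReal_iUnion_fintype_le _) _)
  have h3 := Finset.sum_le_sum fun (i : Fin n) (_ : i ∈ Finset.univ) =>
    measureReal_dist_le_mul ν hδ 0 hΩ (measurable_pi_apply i)
  simp only [Finset.sum_const, Finset.card_univ, Fintype.card_fin, nsmul_eq_mul] at h3
  simp only [nonoverlapProb]
  linarith

theorem measureReal_nonoverlap_avoid_ge (ν : Measure R3) [IsProbabilityMeasure ν] {r δ : ℝ}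
    (hδ : ∀ x, ν.real (Metric.closedBall x (2 * r)) ≤ δ) (n k : ℕ) (X : Fin k → R3) :
    nonoverlapProb ν (n + 1) r - k * (n + 1) * δ * nonoverlapProb ν n r ≤
      (Measure.pi fun _ : Fin (n + 1) => ν).real
        {W | W ∈ OmegaSet (n + 1) r ∧ ∀ i j, 2 * r < dist (X i) (W j)} := by
  have hsub : OmegaSet (n + 1) r ⊆
      {W | W ∈ OmegaSet (n + 1) r ∧ ∀ i j, 2 * r < dist (X i) (W j)} ∪
      ⋃ p : Fin k × Fin (n + 1), {W | p.2.removeNth W ∈ OmegaSet n r ∧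
        dist (W p.2) (X p.1) ≤ 2 * r} := by
    intro W hW
    by_cases h : ∀ i j, 2 * r < dist (X i) (W j)
    · exact Or.inl ⟨hW, h⟩
    · push Not at h
      obtain ⟨i, j, hij⟩ := h
      exact Or.inr (mem_iUnion.2 ⟨(i, j), removeNth_mem_OmegaSet hW j, by rwa [dist_comm]⟩)
  have h1 := measureReal_mono (μ := Measure.pi fun _ : Fin (n + 1) => ν) hsub
  have h2 := (h1.trans (measureReal_union_le _ _)).trans
    (add_le_add_right (measureReal_iUnion_fintype_le _) _)
  have h3 := Finset.sum_le_sum fun (p : Fin k × Fin (n + 1)) (_ : p ∈ Finset.univ) =>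
    measureReal_dist_le_mul ν hδ p.2 (measurableSet_OmegaSet n r)
      (measurable_const (a := X p.1))
  simp only [Finset.sum_const, Finset.card_univ, Fintype.card_fin, Fintype.card_prod,
    nsmul_eq_mul, Nat.cast_mul, Nat.cast_add, Nat.cast_one] at h3
  simp only [nonoverlapProb]
  linarith

/-- Adding `k` particles to `n` costs at most a factor `(1 - ε) ^ k`. -/
theorem nonoverlapProb_add_ge (ν : Measure R3) [IsProbabilityMeasure ν] {r δ ε : ℝ}
    (hδ : ∀ x, ν.real (Metric.closedBall x (2 * r)) ≤ δ) {N : ℕ} (hε : N * δ ≤ ε) (hε1 : ε < 1)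
    (n k : ℕ) (hk : n + k ≤ N) :
    (1 - ε) ^ k * nonoverlapProb ν n r ≤ nonoverlapProb ν (n + k) r := by
  have h0 : 0 ≤ δ := measureReal_nonneg.trans (hδ 0)
  induction k with
  | zero => simp
  | succ k ih =>
    have h1 := ih (by omega)
    have h2 := nonoverlapProb_succ_ge ν hδ (n + k)
    have h3 : ((n + k : ℕ) : ℝ) * δ ≤ ε :=
      (mul_le_mul_of_nonneg_right (by exact_mod_cast (by omega)) h0).trans hε
    calc _ = (1 - ε) * ((1 - ε) ^ k * nonoverlapProb ν n r) := by ring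
      _ ≤ (1 - ε) * nonoverlapProb ν (n + k) r :=
        mul_le_mul_of_nonneg_left h1 (by linarith)
      _ ≤ (1 - (n + k : ℕ) * δ) * nonoverlapProb ν (n + k) r :=
        mul_le_mul_of_nonneg_right (by linarith) (nonoverlapProb_nonneg _ _ _)
      _ ≤ _ := h2

theorem nonoverlapProb_pos (ν : Measure R3) [IsProbabilityMeasure ν] {r δ ε : ℝ}
    (hδ : ∀ x, ν.real (Metric.closedBall x (2 * r)) ≤ δ) {N : ℕ} (hε : N * δ ≤ ε) (hε1 : ε < 1)
    {n : ℕ} (hn : n ≤ N) : 0 < nonoverlapProb ν n r := by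
  have := nonoverlapProb_add_ge ν hδ hε hε1 0 n (by omega)
  rw [nonoverlapProb_zero, zero_add, mul_one] at this
  exact (pow_pos (by linarith) n).trans_le this

/-- Two-sided bound on the ratio between the conditional non-overlap probability given `k`
particles and the full non-overlap probability of `N` particles. -/
theorem nonoverlap_ratio_bounds (ν : Measure R3) [IsProbabilityMeasure ν] {r δ ε : ℝ}
    (hδ : ∀ x, ν.real (Metric.closedBall x (2 * r)) ≤ δ) {N k : ℕ} (hε : N * δ ≤ ε)
    (hε1 : ε < 1) (hk : k < N) (X : Fin k → R3) :
    1 - k * (ε / (1 - ε)) ≤ (nonoverlapProb ν N r)⁻¹ * (Measure.pi fun _ : Fin (N - k) => ν).real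
        {W | W ∈ OmegaSet (N - k) r ∧ ∀ i j, 2 * r < dist (X i) (W j)} ∧
    (nonoverlapProb ν N r)⁻¹ * (Measure.pi fun _ : Fin (N - k) => ν).real
        {W | W ∈ OmegaSet (N - k) r ∧ ∀ i j, 2 * r < dist (X i) (W j)} ≤ ((1 - ε) ^ k)⁻¹ := by
  have h0 : 0 ≤ δ := measureReal_nonneg.trans (hδ 0)
  obtain ⟨m, hm⟩ : ∃ m, N - k = m + 1 := ⟨N - k - 1, by omega⟩
  rw [hm]
  set I := (Measure.pi fun _ : Fin (m + 1) => ν).real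
        {W | W ∈ OmegaSet (m + 1) r ∧ ∀ i j, 2 * r < dist (X i) (W j)} with hI
  have hN : N = (m + 1) + k := by omega
  have hpos := nonoverlapProb_pos ν hδ hε hε1 le_rfl
  have hIle : I ≤ nonoverlapProb ν (m + 1) r := measureReal_mono fun W hW => hW.1
  have hIge := measureReal_nonoverlap_avoid_ge ν hδ m k X
  have hadd := nonoverlapProb_add_ge ν hδ hε hε1 (m + 1) k hN.ge
  rw [← hN] at hadd
  have hone := nonoverlapProb_add_ge ν hδ hε hε1 m 1 (by omega)
  rw [pow_one] at hone
  have hanti : nonoverlapProb ν N r ≤ nonoverlapProb ν (m + 1) r :=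
    nonoverlapProb_antitone ν r (by omega)
  have h1ε : 0 < 1 - ε := by linarith
  have hmε : ((m : ℝ) + 1) * δ ≤ ε :=
    (mul_le_mul_of_nonneg_right (by exact_mod_cast (by omega : m + 1 ≤ N)) h0).trans hε
  have hε0 : 0 ≤ ε := le_trans (by positivity) hmε
  have hzm := nonoverlapProb_nonneg ν m r
  have hI0 : 0 ≤ I := measureReal_nonneg
  constructor
  · rw [inv_mul_eq_div, le_div_iff₀ hpos]
    rcases le_or_gt 0 (1 - k * (ε / (1 - ε))) with hc | hc
    · refine (mul_le_mul_of_nonneg_left hanti hc).trans (le_trans ?_ hIge)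
      have h1 : nonoverlapProb ν m r ≤ nonoverlapProb ν (m + 1) r / (1 - ε) := by
        rw [le_div_iff₀ h1ε]; linarith
      have h2 : (m + 1) * δ * nonoverlapProb ν m r ≤
          ε * (nonoverlapProb ν (m + 1) r / (1 - ε)) := by gcongr
      have h3 := mul_le_mul_of_nonneg_left h2 (Nat.cast_nonneg (α := ℝ) k)
      calc _ = nonoverlapProb ν (m + 1) r -
            k * (ε * (nonoverlapProb ν (m + 1) r / (1 - ε))) := by ring
        _ ≤ nonoverlapProb ν (m + 1) r - k * ((m + 1) * δ * nonoverlapProb ν m r) := by linarith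
        _ = _ := by ring
    · exact (mul_nonpos_of_nonpos_of_nonneg hc.le hpos.le).trans hI0
  · rw [inv_mul_eq_div, div_le_iff₀ hpos, inv_mul_eq_div, le_div_iff₀ (by positivity)]
    rw [mul_comm]
    exact (mul_le_mul_of_nonneg_left hIle (by positivity)).trans hadd

/-- The law of the position of a particle with phase space density `f`. -/
def positionLaw (f : R3 → R3 → ℝ) : Measure R3 :=
  volume.withDensity fun x => ∫⁻ v, ENNReal.ofReal (f x v)

theorem measurable_lintegral_ofReal {f : R3 → R3 → ℝ} (hf : Measurable (Function.uncurry f)) :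
    Measurable fun x => ∫⁻ v, ENNReal.ofReal (f x v) :=
  Measurable.lintegral_prod_right' (f := fun p : R3 × R3 => ENNReal.ofReal (f p.1 p.2))
    (ENNReal.measurable_ofReal.comp hf)

theorem isProbabilityMeasure_positionLaw {f : R3 → R3 → ℝ} (hf : Measurable (Function.uncurry f))
    (hf0 : ∀ x v, 0 ≤ f x v) (hf1 : (∫ z : R3 × R3, f z.1 z.2) = 1) :
    IsProbabilityMeasure (positionLaw f) := by
  constructor
  rw [integral_eq_lintegral_of_nonneg_ae (.of_forall fun z => hf0 _ _)
    hf.aestronglyMeasurable, Measure.volume_eq_prod,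
    lintegral_prod (fun z : R3 × R3 => ENNReal.ofReal (f z.1 z.2))
      (ENNReal.measurable_ofReal.comp hf).aemeasurable,
    ENNReal.toReal_eq_one_iff] at hf1
  rw [positionLaw, withDensity_apply _ .univ, setLIntegral_univ]
  exact hf1

theorem integral_indicator_mul_prod {f : R3 → R3 → ℝ} (hf : Measurable (Function.uncurry f))
    (hf0 : ∀ x v, 0 ≤ f x v) [IsProbabilityMeasure (positionLaw f)] (n : ℕ)
    {A : Set (Fin n → R3)} (hA : MeasurableSet A) :
    ∫ Z : (Fin n → R3) × (Fin n → R3),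
      A.indicator (fun _ => (1 : ℝ)) Z.1 * ∏ i, f (Z.1 i) (Z.2 i) =
    (Measure.pi fun _ : Fin n => positionLaw f).real A := by
  have hprod : Measurable fun Z : (Fin n → R3) × (Fin n → R3) => ∏ i, f (Z.1 i) (Z.2 i) :=
    Finset.measurable_prod _ fun i _ => hf.comp (g := Function.uncurry f)
      (f := fun Z : (Fin n → R3) × (Fin n → R3) => (Z.1 i, Z.2 i)) (by fun_prop)
  have hmeas : Measurable fun Z : (Fin n → R3) × (Fin n → R3) =>
      A.indicator (fun _ => (1 : ℝ)) Z.1 * ∏ i, f (Z.1 i) (Z.2 i) :=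
    ((measurable_const.indicator hA).comp measurable_fst).mul hprod
  have hind : ∀ X, 0 ≤ A.indicator (fun _ => (1 : ℝ)) X :=
    fun X => indicator_nonneg (fun _ _ => zero_le_one) X
  rw [integral_eq_lintegral_of_nonneg_ae (.of_forall fun Z => mul_nonneg (hind _)
    (Finset.prod_nonneg fun i _ => hf0 _ _)) hmeas.aestronglyMeasurable, Measure.volume_eq_prod,
    lintegral_prod _ hmeas.ennreal_ofReal.aemeasurable, measureReal_def]
  have hσ : SigmaFinite (volume.withDensity fun x => ∫⁻ v, ENNReal.ofReal (f x v)) :=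
    inferInstanceAs (SigmaFinite (positionLaw f))
  have hpi : (Measure.pi fun _ : Fin n => positionLaw f) = _ :=
    pi_withDensity_eq volume n _ (measurable_lintegral_ofReal hf)
  rw [hpi, withDensity_apply _ hA, ← lintegral_indicator hA, ← volume_pi]
  congr 1
  refine lintegral_congr fun X => ?_
  by_cases hX : X ∈ A
  · simp only [indicator_of_mem hX, one_mul]
    rw [← lintegral_fin_prod_eq_prod volume n (fun i v => ENNReal.ofReal (f (X i) v))
      fun i => ENNReal.measurable_ofReal.comp (hf.comp measurable_prodMk_left), ← volume_pi]
    exact lintegral_congr fun V => ENNReal.ofReal_prod_of_nonneg fun i _ => hf0 _ _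
  · simp [hX]

theorem ZN_eq_nonoverlapProb {f : R3 → R3 → ℝ} (hf : Measurable (Function.uncurry f))
    (hf0 : ∀ x v, 0 ≤ f x v) [IsProbabilityMeasure (positionLaw f)] (n : ℕ) (r : ℝ) :
    ZN f n r = nonoverlapProb (positionLaw f) n r :=
  integral_indicator_mul_prod hf hf0 n (measurableSet_OmegaSet n r)

theorem prod_combine {N k : ℕ} (hk : k ≤ N) (f : R3 → R3 → ℝ) (X V : Fin k → R3)
    (Y W : Fin (N - k) → R3) :
    ∏ i, f (combine hk X Y i) (combine hk V W i) =
      (∏ i, f (X i) (V i)) * ∏ i, f (Y i) (W i) := by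
  rw [← (finCongr (Nat.add_sub_of_le hk)).prod_comp, Fin.prod_univ_add]
  simp [combine]

theorem combine_mem_OmegaSet_iff {N k : ℕ} (hk : k ≤ N) {r : ℝ} {X : Fin k → R3}
    (hX : X ∈ OmegaSet k r) (Y : Fin (N - k) → R3) :
    combine hk X Y ∈ OmegaSet N r ↔
      Y ∈ OmegaSet (N - k) r ∧ ∀ i j, 2 * r < dist (X i) (Y j) := by
  have hl : ∀ i : Fin k, combine hk X Y ⟨i, by omega⟩ = X i := fun i => by simp [combine]
  have hr : ∀ j : Fin (N - k), combine hk X Y ⟨k + j, by omega⟩ = Y j := fun j => by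
    simp [combine]
  constructor
  · intro h
    refine ⟨fun a b hab => ?_, fun i j => ?_⟩
    · rw [← hr a, ← hr b]
      exact h _ _ (by simpa [Fin.ext_iff] using hab)
    · rw [← hl i, ← hr j]
      exact h _ _ (by simp only [ne_eq, Fin.mk.injEq]; omega)
  · rintro ⟨hY, hXY⟩ a b hab
    have hab' : (a : ℕ) ≠ b := fun h => hab (Fin.ext h)
    unfold combine
    split_ifs with ha hb hb
    · exact hX _ _ (by simpa using hab')
    · exact hXY _ _
    · rw [dist_comm]; exact hXY _ _
    · exact hY _ _ (by simp only [ne_eq, Fin.mk.injEq]; omega)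

theorem measurableSet_nonoverlap_avoid (n k : ℕ) (r : ℝ) (X : Fin k → R3) :
    MeasurableSet {W : Fin n → R3 | W ∈ OmegaSet n r ∧ ∀ i j, 2 * r < dist (X i) (W j)} := by
  have : {W : Fin n → R3 | W ∈ OmegaSet n r ∧ ∀ i j, 2 * r < dist (X i) (W j)} =
      OmegaSet n r ∩ ⋂ i, ⋂ j, {W | 2 * r < dist (X i) (W j)} := by
    ext W; simp
  rw [this]
  exact (measurableSet_OmegaSet n r).inter <| .iInter fun i => .iInter fun j =>
    measurableSet_lt measurable_const (by fun_prop)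

/-- On admissible configurations, the marginal is the tensor product times a ratio of non-overlap
probabilities. -/
theorem margFam_FinitN_eq {f : R3 → R3 → ℝ} (hf : Measurable (Function.uncurry f))
    (hf0 : ∀ x v, 0 ≤ f x v) [IsProbabilityMeasure (positionLaw f)] {N k : ℕ} (hk : k ≤ N)
    {r : ℝ} {X : Fin k → R3} (hX : X ∈ OmegaSet k r) (V : Fin k → R3) :
    margFam N (FinitN f N r) k X V = (∏ i, f (X i) (V i)) *
      ((nonoverlapProb (positionLaw f) N r)⁻¹ *
        (Measure.pi fun _ : Fin (N - k) => positionLaw f).real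
          {W | W ∈ OmegaSet (N - k) r ∧ ∀ i j, 2 * r < dist (X i) (W j)}) := by
  rw [margFam, dif_pos hk, marginal,
    ← integral_indicator_mul_prod hf hf0 _ (measurableSet_nonoverlap_avoid (N - k) k r X),
    ← integral_const_mul, ← integral_const_mul]
  refine integral_congr_ae (.of_forall fun W => ?_)
  have hind : (OmegaSet N r).indicator (fun _ => (1 : ℝ)) (combine hk X W.1) =
      {W | W ∈ OmegaSet (N - k) r ∧ ∀ i j, 2 * r < dist (X i) (W j)}.indicator
        (fun _ => (1 : ℝ)) W.1 := by
    classical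
    simp only [indicator_apply, combine_mem_OmegaSet_iff hk hX, mem_ofPred_eq]
  simp only [FinitN, ZN_eq_nonoverlapProb hf hf0, prod_combine, hind]
  ring

theorem lintegral_gaussian_lt_top (μ₀ : ℝ) {β₀ : ℝ} (hβ₀ : 0 < β₀) :
    ∫⁻ v : R3, ENNReal.ofReal (exp (-μ₀ - β₀ * ‖v‖ ^ 2 / 2)) < ∞ := by
  have h := (GaussianFourier.integrable_cexp_neg_mul_sq_norm_add (V := R3)
    (b := ((β₀ / 2 : ℝ) : ℂ)) (by simpa using hβ₀) 0 0).norm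
  have h2 : Integrable fun v : R3 => exp (-μ₀ - β₀ * ‖v‖ ^ 2 / 2) := by
    refine (h.const_mul (exp (-μ₀))).congr (.of_forall fun v => ?_)
    simp only [Complex.norm_exp]
    rw [← exp_add]
    congr 1
    norm_cast
    simp
    ring
  exact h2.lintegral_lt_top

/-- A bounded position density gives balls of radius `s` a mass of order `s ^ 3`. -/
theorem exists_positionLaw_closedBall_le {β₀ μ₀ : ℝ} (hβ₀ : 0 < β₀) {f : R3 → R3 → ℝ}
    (hf_bound : ∀ x v : R3, f x v ≤ exp (-μ₀ - β₀ * ‖v‖ ^ 2 / 2)) :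
    ∃ C : ℝ, ∀ s : ℝ, 0 ≤ s → ∀ x,
      (positionLaw f).real (Metric.closedBall x s) ≤ C * s ^ 3 := by
  set c := ∫⁻ v : R3, ENNReal.ofReal (exp (-μ₀ - β₀ * ‖v‖ ^ 2 / 2)) with hc
  have hctop : c ≠ ∞ := (lintegral_gaussian_lt_top μ₀ hβ₀).ne
  refine ⟨c.toReal * (volume : Measure R3).real (Metric.ball 0 1), fun s hs x => ?_⟩
  have h1 : positionLaw f (Metric.closedBall x s) ≤
      c * (ENNReal.ofReal (s ^ 3) * (volume : Measure R3) (Metric.ball 0 1)) := by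
    have hv := Measure.addHaar_closedBall (volume : Measure R3) x hs
    rw [finrank_euclideanSpace, Fintype.card_fin] at hv
    rw [positionLaw, withDensity_apply _ Metric.isClosed_closedBall.measurableSet, ← hv,
      ← setLIntegral_const]
    exact lintegral_mono fun y => lintegral_mono fun v => ENNReal.ofReal_le_ofReal (hf_bound y v)
  have hfin : (volume : Measure R3) (Metric.ball 0 1) ≠ ∞ := Metric.isBounded_ball.measure_lt_top.ne
  refine (ENNReal.toReal_mono (by finiteness) h1).trans_eq ?_
  rw [ENNReal.toReal_mul, ENNReal.toReal_mul, ENNReal.toReal_ofReal (by positivity),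
    measureReal_def]
  ring

theorem two_mul_rBG (γ : ℝ) (N : ℕ) : 2 * rBG γ N = √(γ / N) := by
  rw [rBG]; ring

theorem tendsto_two_mul_rBG (γ : ℝ) : Tendsto (fun N : ℕ => 2 * rBG γ N) atTop (𝓝 0) := by
  simp_rw [two_mul_rBG]
  simpa using (tendsto_const_div_atTop_nhds_zero_nat γ).sqrt

/-- In the Boltzmann–Grad scaling the total excluded volume `N (2r)³` vanishes. -/
theorem tendsto_mul_two_mul_rBG_pow {γ : ℝ} (hγ : 0 < γ) (C : ℝ) :
    Tendsto (fun N : ℕ => (N : ℝ) * (C * (2 * rBG γ N) ^ 3)) atTop (𝓝 0) := by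
  have h := (tendsto_two_mul_rBG γ).const_mul (C * γ)
  rw [mul_zero] at h
  refine h.congr' ?_
  filter_upwards [eventually_gt_atTop 0] with N hN
  have hN' : (0 : ℝ) < N := by exact_mod_cast hN
  have hsq : (2 * rBG γ N) ^ 2 = γ / N := by
    rw [two_mul_rBG, sq_sqrt (by positivity)]
  calc C * γ * (2 * rBG γ N) = C * (N * (γ / N)) * (2 * rBG γ N) := by
        rw [mul_div_cancel₀ _ hN'.ne']
    _ = _ := by rw [← hsq]; ring

theorem eventually_forall_mem_OmegaSet {k : ℕ} {K : Set ((Fin k → R3) × (Fin k → R3))}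
    (hK : IsCompact K) (hsub : K ⊆ {Z | ∀ i j : Fin k, i ≠ j → Z.1 i ≠ Z.1 j}) (γ : ℝ) :
    ∀ᶠ N : ℕ in atTop, ∀ Z ∈ K, Z.1 ∈ OmegaSet k (rBG γ N) := by
  have h : ∀ i j : Fin k, ∀ᶠ N : ℕ in atTop, i ≠ j → ∀ Z ∈ K,
      2 * rBG γ N < dist (Z.1 i) (Z.1 j) := by
    intro i j
    by_cases hij : i = j
    · exact .of_forall fun _ h => absurd hij h
    have hc : ContinuousOn (fun Z : (Fin k → R3) × (Fin k → R3) => dist (Z.1 i) (Z.1 j)) K := by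
      fun_prop
    obtain ⟨a, ha, hle⟩ := hK.exists_forall_le' hc (a := 0)
      fun Z hZ => dist_pos.2 (hsub hZ i j hij)
    filter_upwards [(tendsto_two_mul_rBG γ).eventually_lt_const ha] with N hN _ Z hZ
    exact hN.trans_le (hle Z hZ)
  filter_upwards [eventually_all.2 fun i => eventually_all.2 fun j => h i j] with N hN Z hZ i j hij
  exact hN i j hij Z hZ

/-- Convergence of the marginals of admissible initial data in the Boltzmann–Grad scaling
`N(2r)² = γ`: for fixed `k`, `F^in_{N:k} → (f^in)^{⊗k}` uniformly on compact subsets of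
`Ω⁰_k × (ℝ³)^k`. -/
theorem marginals_converge_boltzmann_grad (β₀ μ₀ γ : ℝ) (hβ₀ : 0 < β₀) (hγ : 0 < γ)
    (f : R3 → R3 → ℝ) (hf_cont : Continuous (Function.uncurry f))
    (hf_bound : ∀ x v : R3, 0 ≤ f x v ∧ f x v ≤ exp (-μ₀ - β₀ * ‖v‖ ^ 2 / 2))
    (hf_norm : (∫ z : R3 × R3, f z.1 z.2) = 1) :
    ∀ k : ℕ, 1 ≤ k →
      ∀ K : Set ((Fin k → R3) × (Fin k → R3)), IsCompact K →
        K ⊆ {Z | ∀ i j : Fin k, i ≠ j → Z.1 i ≠ Z.1 j} →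
        TendstoUniformlyOn
          (fun (N : ℕ) (Z : (Fin k → R3) × (Fin k → R3)) =>
            margFam N (FinitN f N (rBG γ N)) k Z.1 Z.2)
          (fun Z => ∏ i, f (Z.1 i) (Z.2 i)) Filter.atTop K := by
  intro k _ K hK hsub
  have hf := hf_cont.measurable
  have hf0 : ∀ x v, 0 ≤ f x v := fun x v => (hf_bound x v).1
  have := isProbabilityMeasure_positionLaw hf hf0 hf_norm
  obtain ⟨C, hC⟩ := exists_positionLaw_closedBall_le hβ₀ fun x v => (hf_bound x v).2
  have hε := tendsto_mul_two_mul_rBG_pow hγ C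
  set ε : ℕ → ℝ := fun N => (N : ℝ) * (C * (2 * rBG γ N) ^ 3) with hε_def
  have hsubε : Tendsto (fun N => 1 - ε N) atTop (𝓝 1) := by simpa using hε.const_sub 1
  have hlow : Tendsto (fun N => 1 - k * (ε N / (1 - ε N))) atTop (𝓝 1) := by
    simpa using ((hε.div hsubε one_ne_zero).const_mul (k : ℝ)).const_sub 1
  have hup : Tendsto (fun N => ((1 - ε N) ^ k)⁻¹) atTop (𝓝 1) := by
    simpa using (hsubε.pow k).inv₀ (by simp)
  set M : ℝ := exp (-μ₀) ^ k with hM_def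
  have hM : 0 < M := by positivity
  rw [Metric.tendstoUniformlyOn_iff]
  intro η hη
  have hη' : 0 < η / M := by positivity
  filter_upwards [hlow.eventually_const_lt (sub_lt_self 1 hη'),
    hup.eventually_lt_const (lt_add_of_pos_right 1 hη'), hε.eventually_lt_const one_pos,
    eventually_gt_atTop k, eventually_forall_mem_OmegaSet hK hsub γ] with N hl hu hε1 hkN hΩ Z hZ
  have hr : 0 ≤ 2 * rBG γ N := by rw [two_mul_rBG]; positivity
  obtain ⟨h1, h2⟩ := nonoverlap_ratio_bounds (positionLaw f) (hC _ hr) le_rfl hε1 hkN Z.1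
  rw [margFam_FinitN_eq hf hf0 hkN.le (hΩ Z hZ)]
  set q := (nonoverlapProb (positionLaw f) N (rBG γ N))⁻¹ *
    (Measure.pi fun _ : Fin (N - k) => positionLaw f).real
      {W | W ∈ OmegaSet (N - k) (rBG γ N) ∧ ∀ i j, 2 * rBG γ N < dist (Z.1 i) (W j)}
  set p := ∏ i, f (Z.1 i) (Z.2 i) with hp_def
  have hp0 : 0 ≤ p := Finset.prod_nonneg fun i _ => hf0 _ _
  have hpM : p ≤ M := by
    calc p ≤ ∏ _i : Fin k, exp (-μ₀) := Finset.prod_le_prod (fun i _ => hf0 _ _) fun i _ =>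
          (hf_bound _ _).2.trans (exp_le_exp.2 (by
            have : 0 ≤ β₀ * ‖Z.2 i‖ ^ 2 / 2 := by positivity
            linarith))
      _ = M := by simp [hM_def]
  have hq : |1 - q| < η / M := by
    rw [abs_lt]
    constructor <;> linarith
  calc dist p (p * q) = p * |1 - q| := by
        rw [Real.dist_eq, show p - p * q = p * (1 - q) by ring, abs_mul, abs_of_nonneg hp0]
    _ ≤ M * |1 - q| := mul_le_mul_of_nonneg_right hpM (abs_nonneg _)
    _ < M * (η / M) := mul_lt_mul_of_pos_left hq hM
    _ = η := mul_div_cancel₀ _ hM.ne'
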